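/- Existence of the localizer ψ for propagation along the unstable direction: For every ε₀ > 0 there exists δ₀ ∈ (0, ε₀/3) such that for every δ ∈ (0, δ₀] there exist infinitely differentiable functions ψ, ψ₋, ψ₊, b̃, ẽ: ℝ → ℝ with the following properties: (i) 0 ≤ ψ ≤ 1 and the support of ψ is contained in [−4δ, 2ε₀]; (ii) ψ' ≥ 0 on (−∞, 0], ψ(−3δ) ≥ 1/4, ψ'(x) ≥ 1/(12δ) for x ∈ [−3δ, 3δ], and ψ'(x) ≥ −1/ε₀ for x ∈ [0,∞); (iii) ψ(x) ≤ 12δ·ψ'(x) for x ∈ [−4δ, 3δ]; (iv) ψ² = ψ₋² + ψ₊², with ψ₋ = ψ on (−∞, 3δ], the support of ψ₋ contained in [−4δ, 4δ], 0 ≤ ψ₊ ≤ 1, and the support of ψ₊ contained in (3δ, 2ε₀]; (v) ψ·ψ' = (1/(24δ))·ψ₋² + (1/(24δ))·b̃² − ẽ, where b̃ ≥ 0, the support of b̃ is contained in [−4δ, 4δ], b̃(x) ≥ 1/4 for x ∈ [−3δ, 3δ], the support of ẽ is contained in (3δ, 2ε₀], and |ẽ| ≤ 1/ε₀ everywhere.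 -/

import Mathlib

/-!
In the variable `s = x / δ + 4` the rising part of `ψ` is `P s = exp (s / 12 - 3 / (4 s) - 1 / 2)`,
extended by zero to `s ≤ 0`. Its logarithmic derivative is `1 / 12 + 3 / (4 s ^ 2)`, so `P ≤ 12 P'`
and `24 P P' - P ^ 2 = (1 + 18 / s ^ 2) P ^ 2` is the square of the smooth function
`B = s⁻¹ P √(s ^ 2 + 18)`.

To stop the rise after `s = 7` without losing this square, compose `P` with a function `U` such that
`U s = s` for `s ≤ 7` and `U' = v ^ 2`, where `v` is a smooth cutoff: then
`24 (P ∘ U) (P ∘ U)' = v ^ 2 (P ∘ U) ^ 2 + (v (B ∘ U)) ^ 2`. Multiplying `P ∘ U` by a cutoff `G`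
that descends from `1` to `0` beyond `x = 4 δ`, where `v` already vanishes, gives `ψ`; the descent
contributes only the error term `ẽ = -(P ∘ U) ^ 2 G G'`. With `v = cos θ`, the pieces of `ψ ^ 2` are
`ψ₋ = ψ cos θ` and `ψ₊ = ψ sin θ`.
-/

open Set MeasureTheory
open scoped ContDiff

section Primitives

theorem contDiff_infty_of_hasDerivAt {f f' : ℝ → ℝ} (hf' : ContDiff ℝ ∞ f')
    (hf : ∀ x, HasDerivAt f (f' x) x) : ContDiff ℝ ∞ f := by
  have hderiv : deriv f = f' := funext fun x => (hf x).deriv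
  exact contDiff_infty_iff_deriv.2 ⟨fun x => (hf x).differentiableAt, hderiv ▸ hf'⟩

theorem hasDerivAt_integral_right {f : ℝ → ℝ} (hf : Continuous f) (a x : ℝ) :
    HasDerivAt (fun y => ∫ t in a..y, f t) (f x) x :=
  (hf.integral_hasStrictDerivAt a x).hasDerivAt

end Primitives

section SlowCutoff

/-- `G` is a smooth decreasing cutoff, equal to `1` on `(-∞, a]` and to `0` on `[b, ∞)`, that
descends with slope at most `C`. -/
structure IsSlowCutoff (a b C : ℝ) (G : ℝ → ℝ) : Prop where
  contDiff : ContDiff ℝ ∞ G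
  antitone : Antitone G
  eq_one : ∀ x ≤ a, G x = 1
  eq_zero : ∀ x, b ≤ x → G x = 0
  neg_le_deriv : ∀ x, -C ≤ deriv G x

namespace IsSlowCutoff

variable {a b C : ℝ} {G : ℝ → ℝ}

theorem differentiable (hG : IsSlowCutoff a b C G) : Differentiable ℝ G :=
  hG.contDiff.differentiable (by simp)

theorem nonneg (hG : IsSlowCutoff a b C G) (x : ℝ) : 0 ≤ G x :=
  hG.eq_zero (max x b) (le_max_right x b) ▸ hG.antitone (le_max_left x b)

theorem le_one (hG : IsSlowCutoff a b C G) (x : ℝ) : G x ≤ 1 :=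
  hG.eq_one (min x a) (min_le_right x a) ▸ hG.antitone (min_le_left x a)

theorem deriv_eq_zero_of_lt (hG : IsSlowCutoff a b C G) {x : ℝ} (hx : x < a) : deriv G x = 0 := by
  have heq : G =ᶠ[nhds x] fun _ => 1 := by
    filter_upwards [Iio_mem_nhds hx] with y hy using hG.eq_one y (mem_Iio.1 hy).le
  rw [heq.deriv_eq, deriv_const]

theorem abs_deriv_le (hG : IsSlowCutoff a b C G) (x : ℝ) : |deriv G x| ≤ C := by
  rw [abs_of_nonpos hG.antitone.deriv_nonpos]
  linarith [hG.neg_le_deriv x]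

end IsSlowCutoff

theorem exists_contDiff_integral_eq_one_le {a b C : ℝ} (hab : a < b) (hC : 1 < C * (b - a)) :
    ∃ g : ℝ → ℝ, ContDiff ℝ ∞ g ∧ (∀ x, 0 ≤ g x) ∧ (∀ x, g x ≤ C) ∧
      Function.support g ⊆ Ioo a b ∧ ∫ x, g x = 1 := by
  have hC0 : 0 < C := pos_of_mul_pos_left (one_pos.trans hC) (sub_pos.2 hab).le
  let f : ContDiffBump ((a + b) / 2) :=
    ⟨1 / (2 * C), (b - a) / 2, by positivity, by rw [div_lt_div_iff₀] <;> linarith⟩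
  refine ⟨f.normed volume, f.contDiff_normed, f.nonneg_normed, fun x => ?_, ?_, f.integral_normed⟩
  · have hvol : volume.real (Metric.closedBall ((a + b) / 2) (1 / (2 * C))) = 1 / C := by
      rw [Real.volume_real_closedBall (by positivity)]
      field_simp
    have hle := f.normed_le_div_measure_closedBall_rIn (μ := volume) x
    rwa [hvol, one_div_one_div] at hle
  · rw [f.support_normed_eq, Real.ball_eq_Ioo]
    exact Ioo_subset_Ioo (by change a ≤ (a + b) / 2 - (b - a) / 2; linarith)
      (by change (a + b) / 2 + (b - a) / 2 ≤ b; linarith)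

theorem exists_isSlowCutoff {a b C : ℝ} (hab : a < b) (hC : 1 < C * (b - a)) :
    ∃ G, IsSlowCutoff a b C G := by
  obtain ⟨g, hg, hg0, hgC, hsupp, hint⟩ := exists_contDiff_integral_eq_one_le hab hC
  have hderiv (x : ℝ) : HasDerivAt (fun y => 1 - ∫ t in a..y, g t) (-g x) x :=
    (hasDerivAt_integral_right hg.continuous a x).const_sub 1
  refine ⟨fun x => 1 - ∫ t in a..x, g t, contDiff_infty_of_hasDerivAt hg.neg hderiv,
    antitone_of_hasDerivAt_nonpos hderiv fun x => neg_nonpos.2 (hg0 x), fun x hx => ?_,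
    fun x hx => ?_, fun x => ?_⟩
  · have hzero : EqOn g (fun _ => 0) (uIcc a x) := fun t ht =>
      Function.notMem_support.1 fun h => (hsupp h).1.not_ge (uIcc_of_ge hx ▸ ht).2
    simp only [intervalIntegral.integral_congr hzero, intervalIntegral.integral_zero, sub_zero]
  · have hIoc : Function.support g ⊆ Ioc a x := fun t ht =>
      ⟨(hsupp ht).1, (hsupp ht).2.le.trans hx⟩
    simp only [intervalIntegral.integral_eq_integral_of_support_subset hIoc, hint, sub_self]
  · rw [(hderiv x).deriv]
    exact neg_le_neg (hgC x)

end SlowCutoff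

section TrigonometricCutoffs

/-- For `a < b`, a smooth angle rising from `0` on `(-∞, a]` to `π / 2` on `[b, ∞)`; its
cosine and sine are smooth cutoffs whose squares sum to `1`. -/
noncomputable def cutoffAngle (a b s : ℝ) : ℝ :=
  Real.pi / 2 * Real.smoothTransition ((s - a) / (b - a))

/-- The cosine of `cutoffAngle a b`, the cutoff to the left. -/
noncomputable def cosCutoff (a b s : ℝ) : ℝ := Real.cos (cutoffAngle a b s)

/-- The sine of `cutoffAngle a b`, the cutoff to the right complementary to `cosCutoff a b`. -/
noncomputable def sinCutoff (a b s : ℝ) : ℝ := Real.sin (cutoffAngle a b s)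

/-- A change of variable with derivative `cosCutoff a b ^ 2`: the identity up to `a`, constant
from `b` on. -/
noncomputable def flatten (a b s : ℝ) : ℝ := a + ∫ t in a..s, cosCutoff a b t ^ 2

variable {a b s : ℝ}

theorem contDiff_cutoffAngle : ContDiff ℝ ∞ (cutoffAngle a b) :=
  contDiff_const.mul
    (Real.smoothTransition.contDiff.comp ((contDiff_id.sub contDiff_const).div_const _))

theorem cutoffAngle_nonneg : 0 ≤ cutoffAngle a b s :=
  mul_nonneg (by positivity) (Real.smoothTransition.nonneg _)

theorem cutoffAngle_le_pi_div_two : cutoffAngle a b s ≤ Real.pi / 2 :=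
  mul_le_of_le_one_right (by positivity) (Real.smoothTransition.le_one _)

theorem cutoffAngle_of_le (hab : a ≤ b) (hs : s ≤ a) : cutoffAngle a b s = 0 := by
  have harg : (s - a) / (b - a) ≤ 0 :=
    div_nonpos_of_nonpos_of_nonneg (sub_nonpos.2 hs) (sub_nonneg.2 hab)
  rw [cutoffAngle, Real.smoothTransition.zero_of_nonpos harg, mul_zero]

theorem cutoffAngle_of_ge (hab : a < b) (hs : b ≤ s) : cutoffAngle a b s = Real.pi / 2 := by
  have harg : 1 ≤ (s - a) / (b - a) := by
    rw [one_le_div (sub_pos.2 hab)]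
    exact sub_le_sub_right hs a
  rw [cutoffAngle, Real.smoothTransition.one_of_one_le harg, mul_one]

theorem contDiff_cosCutoff : ContDiff ℝ ∞ (cosCutoff a b) :=
  Real.contDiff_cos.comp contDiff_cutoffAngle

theorem contDiff_sinCutoff : ContDiff ℝ ∞ (sinCutoff a b) :=
  Real.contDiff_sin.comp contDiff_cutoffAngle

theorem cosCutoff_sq_add_sinCutoff_sq : cosCutoff a b s ^ 2 + sinCutoff a b s ^ 2 = 1 :=
  Real.cos_sq_add_sin_sq _

theorem cosCutoff_nonneg : 0 ≤ cosCutoff a b s :=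
  Real.cos_nonneg_of_neg_pi_div_two_le_of_le
    ((neg_nonpos.2 (by positivity)).trans cutoffAngle_nonneg) cutoffAngle_le_pi_div_two

theorem sinCutoff_nonneg : 0 ≤ sinCutoff a b s :=
  Real.sin_nonneg_of_nonneg_of_le_pi cutoffAngle_nonneg
    (cutoffAngle_le_pi_div_two.trans (half_le_self Real.pi_pos.le))

theorem sinCutoff_le_one : sinCutoff a b s ≤ 1 := Real.sin_le_one _

theorem cosCutoff_of_le (hab : a ≤ b) (hs : s ≤ a) : cosCutoff a b s = 1 := by
  rw [cosCutoff, cutoffAngle_of_le hab hs, Real.cos_zero]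

theorem sinCutoff_of_le (hab : a ≤ b) (hs : s ≤ a) : sinCutoff a b s = 0 := by
  rw [sinCutoff, cutoffAngle_of_le hab hs, Real.sin_zero]

theorem cosCutoff_of_ge (hab : a < b) (hs : b ≤ s) : cosCutoff a b s = 0 := by
  rw [cosCutoff, cutoffAngle_of_ge hab hs, Real.cos_pi_div_two]

theorem hasDerivAt_flatten : HasDerivAt (flatten a b) (cosCutoff a b s ^ 2) s :=
  (hasDerivAt_integral_right (contDiff_cosCutoff.continuous.pow 2) a s).const_add a

theorem contDiff_flatten : ContDiff ℝ ∞ (flatten a b) :=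
  contDiff_infty_of_hasDerivAt (contDiff_cosCutoff.pow 2) fun _ => hasDerivAt_flatten

theorem flatten_of_le (hab : a ≤ b) (hs : s ≤ a) : flatten a b s = s := by
  have hone : EqOn (fun t => cosCutoff a b t ^ 2) (fun _ => 1) (uIcc a s) := fun t ht => by
    simp only [cosCutoff_of_le hab (uIcc_of_ge hs ▸ ht).2, one_pow]
  rw [flatten, intervalIntegral.integral_congr hone, integral_one, add_sub_cancel]

theorem flatten_le (hab : a < b) : flatten a b s ≤ b := by
  have hdiff : Differentiable ℝ (flatten a b) := fun t => hasDerivAt_flatten.differentiableAt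
  have hmono : Monotone (flatten a b) :=
    monotone_of_hasDerivAt_nonneg (fun t => hasDerivAt_flatten) fun t => sq_nonneg _
  have hb : flatten a b b ≤ b := by
    have := image_sub_le_mul_sub_of_deriv_le hdiff (C := 1)
      (fun t => hasDerivAt_flatten.deriv.trans_le (Real.cos_sq_le_one _)) hab.le
    linarith [flatten_of_le hab.le le_rfl]
  have hconst : flatten a b (max s b) ≤ flatten a b b := by
    have := (convex_Ici b).image_sub_le_mul_sub_of_deriv_le hdiff.continuous.continuousOn
      hdiff.differentiableOn (C := 0)
      (fun t ht => by
        rw [hasDerivAt_flatten.deriv, cosCutoff_of_ge hab (interior_subset ht), sq, zero_mul])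
      b self_mem_Ici (max s b) (le_max_right s b) (le_max_right s b)
    linarith
  exact (hmono (le_max_left s b)).trans (hconst.trans hb)

end TrigonometricCutoffs

section RisingProfile

theorem hasDerivAt_expNegInvGlue (x : ℝ) :
    HasDerivAt expNegInvGlue (x⁻¹ ^ 2 * expNegInvGlue x) x := by
  simpa using expNegInvGlue.hasDerivAt_polynomial_eval_inv_mul 1 x

theorem contDiff_inv_mul_expNegInvGlue : ContDiff ℝ ∞ fun x => x⁻¹ * expNegInvGlue x := by
  simpa using expNegInvGlue.contDiff_polynomial_eval_inv_mul (n := ⊤) Polynomial.X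

/-- The rising part `P` of the localizer in the rescaled variable, before flattening: it is
`exp (s / 12 - 3 / (4 s) - 1 / 2)` for `0 < s` and `0` for `s ≤ 0`. -/
noncomputable def risingProfile (s : ℝ) : ℝ :=
  Real.exp ((s - 6) / 12) * expNegInvGlue (4 * s / 3)

/-- The nonnegative smooth square root of `24 P P' - P ^ 2`, for `P = risingProfile`. -/
noncomputable def risingRemainder (s : ℝ) : ℝ := s⁻¹ * risingProfile s * √(s ^ 2 + 18)

variable {s : ℝ}

theorem risingProfile_of_nonpos (hs : s ≤ 0) : risingProfile s = 0 := by
  rw [risingProfile, expNegInvGlue.zero_of_nonpos (by linarith), mul_zero]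

theorem risingProfile_of_pos (hs : 0 < s) :
    risingProfile s = Real.exp (s / 12 - 3 / (4 * s) - 1 / 2) := by
  rw [risingProfile, expNegInvGlue, if_neg (by linarith), ← Real.exp_add]
  congr 1
  field_simp
  ring

theorem risingProfile_nonneg : 0 ≤ risingProfile s :=
  mul_nonneg (Real.exp_pos _).le (expNegInvGlue.nonneg _)

theorem contDiff_risingProfile : ContDiff ℝ ∞ risingProfile :=
  ((contDiff_id.sub contDiff_const).div_const 12).exp.mul
    (expNegInvGlue.contDiff.comp ((contDiff_const.mul contDiff_id).div_const 3))

theorem hasDerivAt_risingProfile (s : ℝ) :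
    HasDerivAt risingProfile ((1 / 12 + 3 / 4 * s⁻¹ ^ 2) * risingProfile s) s := by
  have hexp := (((hasDerivAt_id s).sub_const 6).div_const 12).exp
  have hglue := (hasDerivAt_expNegInvGlue (4 * s / 3)).comp s
    (((hasDerivAt_id s).const_mul 4).div_const 3)
  refine (hexp.mul hglue).congr_deriv ?_
  simp only [risingProfile, Function.comp_apply, id_eq]
  ring

theorem risingProfile_le_one (hs : s ≤ 36 / 5) : risingProfile s ≤ 1 := by
  rcases le_or_gt s 0 with hs0 | hs0
  · exact (risingProfile_of_nonpos hs0).trans_le zero_le_one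
  · rw [risingProfile_of_pos hs0, Real.exp_le_one_iff]
    have : 5 / 48 ≤ 3 / (4 * s) := by
      rw [div_le_div_iff₀ (by norm_num) (by positivity)]
      linarith
    linarith

theorem one_div_four_le_risingProfile (hs : 1 ≤ s) : 1 / 4 ≤ risingProfile s := by
  have hexponent : -(7 / 6) ≤ s / 12 - 3 / (4 * s) - 1 / 2 := by
    have : 3 / (4 * s) ≤ 3 / 4 :=
      div_le_div_of_nonneg_left (by norm_num) (by norm_num) (by linarith)
    linarith
  calc 1 / 4 = Real.exp (-Real.log 4) := by rw [Real.exp_neg, Real.exp_log four_pos, one_div]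
    _ ≤ Real.exp (-(7 / 6)) := by
      have : Real.log 4 = 2 * Real.log 2 := by
        rw [show (4 : ℝ) = 2 ^ 2 by norm_num, Real.log_pow, Nat.cast_ofNat]
      exact Real.exp_le_exp.2 (by linarith [Real.log_two_gt_d9])
    _ ≤ risingProfile s := by
      rw [risingProfile_of_pos (by linarith)]
      exact Real.exp_le_exp.2 hexponent

theorem three_fifths_le_exp_neg_half : 3 / 5 ≤ Real.exp (-(1 / 2)) := by
  have hsq : Real.exp (1 / 2) ^ 2 ≤ (5 / 3) ^ 2 := by
    rw [← Real.exp_nat_mul, Nat.cast_ofNat, mul_one_div_cancel two_ne_zero]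
    linarith [Real.exp_one_lt_d9]
  have hle : Real.exp (1 / 2) ≤ 5 / 3 := le_of_sq_le_sq hsq (by norm_num)
  rw [Real.exp_neg, ← inv_div]
  exact inv_anti₀ (Real.exp_pos _) hle

theorem three_fifths_mul_le_risingProfile (hs : 0 < s) :
    3 / 5 * (s / 12 - 3 / (4 * s) + 1) ≤ risingProfile s := by
  rw [risingProfile_of_pos hs, sub_eq_add_neg _ (1 / 2), add_comm _ (-(1 / 2)), Real.exp_add]
  exact mul_le_mul_of_nonneg three_fifths_le_exp_neg_half (Real.add_one_le_exp _) (by norm_num)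
    (Real.exp_pos _).le

theorem one_div_twelve_le_deriv_risingProfile (hs1 : 1 ≤ s) (hs7 : s ≤ 7) :
    1 / 12 ≤ deriv risingProfile s := by
  have hs : 0 < s := by linarith
  have hquartic : 0 ≤ s ^ 4 - 8 * s ^ 3 + 108 * s - 81 := by
    nlinarith [sq_nonneg (s ^ 2 - 4 * s - 5), mul_nonneg (sub_nonneg.2 hs1) (sub_nonneg.2 hs7)]
  calc 1 / 12
      ≤ 1 / 12 + (s ^ 4 - 8 * s ^ 3 + 108 * s - 81) / (240 * s ^ 3) :=
        le_add_of_nonneg_right (by positivity)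
    _ = (1 / 12 + 3 / 4 * s⁻¹ ^ 2) * (3 / 5 * (s / 12 - 3 / (4 * s) + 1)) := by
        field_simp
        ring
    _ ≤ (1 / 12 + 3 / 4 * s⁻¹ ^ 2) * risingProfile s :=
        mul_le_mul_of_nonneg_left (three_fifths_mul_le_risingProfile hs) (by positivity)
    _ = deriv risingProfile s := (hasDerivAt_risingProfile s).deriv.symm

theorem inv_mul_risingProfile (s : ℝ) : s⁻¹ * risingProfile s =
    Real.exp ((s - 6) / 12) * (4 / 3 * ((4 * s / 3)⁻¹ * expNegInvGlue (4 * s / 3))) := by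
  rw [risingProfile]
  ring

theorem contDiff_inv_mul_risingProfile : ContDiff ℝ ∞ fun s => s⁻¹ * risingProfile s := by
  have hexp : ContDiff ℝ ∞ fun s : ℝ => Real.exp ((s - 6) / 12) :=
    ((contDiff_id.sub contDiff_const).div_const 12).exp
  have hscale : ContDiff ℝ ∞ fun s : ℝ => 4 * s / 3 :=
    (contDiff_const.mul contDiff_id).div_const 3
  simp only [inv_mul_risingProfile]
  exact hexp.mul (contDiff_const.mul (contDiff_inv_mul_expNegInvGlue.comp hscale))

theorem contDiff_risingRemainder : ContDiff ℝ ∞ risingRemainder :=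
  contDiff_inv_mul_risingProfile.mul
    (((contDiff_id.pow 2).add contDiff_const).sqrt fun s => by positivity)

theorem risingRemainder_of_nonpos (hs : s ≤ 0) : risingRemainder s = 0 := by
  rw [risingRemainder, risingProfile_of_nonpos hs, mul_zero, zero_mul]

theorem risingRemainder_nonneg : 0 ≤ risingRemainder s := by
  rcases le_or_gt s 0 with hs | hs
  · exact (risingRemainder_of_nonpos hs).ge
  · exact mul_nonneg (mul_nonneg (inv_nonneg.2 hs.le) risingProfile_nonneg) (Real.sqrt_nonneg _)

theorem risingRemainder_sq (s : ℝ) :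
    risingRemainder s ^ 2 = 24 * risingProfile s * deriv risingProfile s - risingProfile s ^ 2 := by
  rw [(hasDerivAt_risingProfile s).deriv, risingRemainder, mul_pow, Real.sq_sqrt (by positivity)]
  rcases eq_or_ne s 0 with rfl | hs
  · simp only [risingProfile_of_nonpos le_rfl]
    ring
  · field_simp
    ring

theorem risingProfile_le_twelve_mul_deriv (s : ℝ) :
    risingProfile s ≤ 12 * deriv risingProfile s := by
  rw [(hasDerivAt_risingProfile s).deriv]
  have : 0 ≤ s⁻¹ ^ 2 * risingProfile s := mul_nonneg (sq_nonneg _) risingProfile_nonneg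
  linarith

theorem risingProfile_le_risingRemainder (s : ℝ) : risingProfile s ≤ risingRemainder s := by
  refine le_of_sq_le_sq ?_ risingRemainder_nonneg
  have := mul_le_mul_of_nonneg_left (risingProfile_le_twelve_mul_deriv s)
    (risingProfile_nonneg (s := s))
  linarith [risingRemainder_sq s]

end RisingProfile

section Ramp

/-- The rescaled coordinate at which the localizer stops rising. Any number in `(7, 8]` at
which `risingProfile` is still at most `1` would do. -/
noncomputable def rampEnd : ℝ := 36 / 5

/-- The rising part of the localizer in the rescaled variable: `risingProfile` up to `7`, constant
from `rampEnd` on. -/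
noncomputable def ramp (s : ℝ) : ℝ := risingProfile (flatten 7 rampEnd s)

/-- The nonnegative smooth square root of `24 R R' - (v R) ^ 2`, for `R = ramp` and
`v = cosCutoff 7 rampEnd`; it is the `b̃` of the localizer in the rescaled variable. -/
noncomputable def rampRemainder (s : ℝ) : ℝ :=
  cosCutoff 7 rampEnd s * risingRemainder (flatten 7 rampEnd s)

variable {s : ℝ}

theorem seven_lt_rampEnd : 7 < rampEnd := by norm_num [rampEnd]

theorem contDiff_ramp : ContDiff ℝ ∞ ramp := contDiff_risingProfile.comp contDiff_flatten

theorem contDiff_rampRemainder : ContDiff ℝ ∞ rampRemainder :=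
  contDiff_cosCutoff.mul (contDiff_risingRemainder.comp contDiff_flatten)

theorem deriv_ramp (s : ℝ) :
    deriv ramp s = deriv risingProfile (flatten 7 rampEnd s) * cosCutoff 7 rampEnd s ^ 2 :=
  ((hasDerivAt_risingProfile _).differentiableAt.hasDerivAt.comp s hasDerivAt_flatten).deriv

theorem ramp_of_le_seven (hs : s ≤ 7) : ramp s = risingProfile s := by
  rw [ramp, flatten_of_le seven_lt_rampEnd.le hs]

theorem deriv_ramp_of_le_seven (hs : s ≤ 7) : deriv ramp s = deriv risingProfile s := by
  rw [deriv_ramp, flatten_of_le seven_lt_rampEnd.le hs,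
    cosCutoff_of_le seven_lt_rampEnd.le hs, one_pow, mul_one]

theorem rampRemainder_of_le_seven (hs : s ≤ 7) : rampRemainder s = risingRemainder s := by
  rw [rampRemainder, flatten_of_le seven_lt_rampEnd.le hs,
    cosCutoff_of_le seven_lt_rampEnd.le hs, one_mul]

theorem ramp_nonneg : 0 ≤ ramp s := risingProfile_nonneg

theorem ramp_le_one : ramp s ≤ 1 := risingProfile_le_one (flatten_le seven_lt_rampEnd)

theorem ramp_of_nonpos (hs : s ≤ 0) : ramp s = 0 := by
  rw [ramp_of_le_seven (by linarith), risingProfile_of_nonpos hs]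

theorem deriv_ramp_nonneg : 0 ≤ deriv ramp s := by
  rw [deriv_ramp]
  have := risingProfile_le_twelve_mul_deriv (flatten 7 rampEnd s)
  exact mul_nonneg (by linarith [risingProfile_nonneg (s := flatten 7 rampEnd s)]) (sq_nonneg _)

theorem deriv_ramp_of_ge (hs : rampEnd ≤ s) : deriv ramp s = 0 := by
  rw [deriv_ramp, cosCutoff_of_ge seven_lt_rampEnd hs, sq, zero_mul, mul_zero]

theorem rampRemainder_nonneg : 0 ≤ rampRemainder s :=
  mul_nonneg cosCutoff_nonneg risingRemainder_nonneg

theorem rampRemainder_of_nonpos (hs : s ≤ 0) : rampRemainder s = 0 := by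
  rw [rampRemainder_of_le_seven (by linarith), risingRemainder_of_nonpos hs]

theorem rampRemainder_of_ge (hs : rampEnd ≤ s) : rampRemainder s = 0 := by
  rw [rampRemainder, cosCutoff_of_ge seven_lt_rampEnd hs, zero_mul]

theorem twentyFour_mul_ramp_mul_deriv_ramp (s : ℝ) :
    24 * ramp s * deriv ramp s = (ramp s * cosCutoff 7 rampEnd s) ^ 2 + rampRemainder s ^ 2 := by
  rw [deriv_ramp, rampRemainder, mul_pow _ (risingRemainder _), risingRemainder_sq, ramp]
  ring

end Ramp

section Localizer

/-- The affine coordinate carrying `[-4δ, 4δ]` to `[0, 8]` and `[-3δ, 3δ]` to `[1, 7]`. -/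
noncomputable def rescale (δ x : ℝ) : ℝ := x / δ + 4

/-- The localizer `ψ`, built from a slow cutoff `G`. -/
noncomputable def localizer (δ : ℝ) (G : ℝ → ℝ) (x : ℝ) : ℝ := ramp (rescale δ x) * G x

/-- The piece `ψ₋` of the localizer near the trapped set. -/
noncomputable def localizerNear (δ : ℝ) (G : ℝ → ℝ) (x : ℝ) : ℝ :=
  localizer δ G x * cosCutoff 7 rampEnd (rescale δ x)

/-- The piece `ψ₊` of the localizer away from the trapped set. -/
noncomputable def localizerFar (δ : ℝ) (G : ℝ → ℝ) (x : ℝ) : ℝ :=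
  localizer δ G x * sinCutoff 7 rampEnd (rescale δ x)

/-- The error `ẽ` in the decomposition of `ψ ψ'`, caused by the descent of `G`. -/
noncomputable def localizerError (δ : ℝ) (G : ℝ → ℝ) (x : ℝ) : ℝ :=
  -(ramp (rescale δ x) ^ 2 * G x * deriv G x)

variable {δ b c C x : ℝ} {G : ℝ → ℝ}

theorem contDiff_rescale : ContDiff ℝ ∞ (rescale δ) :=
  (contDiff_id.div_const δ).add contDiff_const

theorem hasDerivAt_rescale : HasDerivAt (rescale δ) (1 / δ) x :=
  ((hasDerivAt_id x).div_const δ).add_const 4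

theorem rescale_le_iff (hδ : 0 < δ) : rescale δ x ≤ c ↔ x ≤ (c - 4) * δ := by
  rw [rescale, ← le_sub_iff_add_le, div_le_iff₀ hδ]

theorem le_rescale_iff (hδ : 0 < δ) : c ≤ rescale δ x ↔ (c - 4) * δ ≤ x := by
  rw [rescale, ← sub_le_iff_le_add, le_div_iff₀ hδ]

theorem rescale_nonpos (hδ : 0 < δ) (hx : x ≤ -(4 * δ)) : rescale δ x ≤ 0 :=
  (rescale_le_iff hδ).2 (by linarith)

theorem rescale_le_seven (hδ : 0 < δ) (hx : x ≤ 3 * δ) : rescale δ x ≤ 7 :=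
  (rescale_le_iff hδ).2 (by linarith)

theorem one_le_rescale (hδ : 0 < δ) (hx : -(3 * δ) ≤ x) : 1 ≤ rescale δ x :=
  (le_rescale_iff hδ).2 (by linarith)

theorem rampEnd_le_rescale (hδ : 0 < δ) (hx : 4 * δ ≤ x) : rampEnd ≤ rescale δ x :=
  (le_rescale_iff hδ).2 (by rw [rampEnd]; linarith)

theorem contDiff_localizer (hG : ContDiff ℝ ∞ G) : ContDiff ℝ ∞ (localizer δ G) :=
  (contDiff_ramp.comp contDiff_rescale).mul hG

theorem contDiff_localizerNear (hG : ContDiff ℝ ∞ G) : ContDiff ℝ ∞ (localizerNear δ G) :=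
  (contDiff_localizer hG).mul (contDiff_cosCutoff.comp contDiff_rescale)

theorem contDiff_localizerFar (hG : ContDiff ℝ ∞ G) : ContDiff ℝ ∞ (localizerFar δ G) :=
  (contDiff_localizer hG).mul (contDiff_sinCutoff.comp contDiff_rescale)

theorem contDiff_localizerError (hG : ContDiff ℝ ∞ G) : ContDiff ℝ ∞ (localizerError δ G) :=
  ((((contDiff_ramp.comp contDiff_rescale).pow 2).mul hG).mul (contDiff_infty_iff_deriv.1 hG).2).neg

theorem localizer_sq :
    localizer δ G x ^ 2 = localizerNear δ G x ^ 2 + localizerFar δ G x ^ 2 := by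
  rw [localizerNear, localizerFar, mul_pow, mul_pow, ← mul_add, cosCutoff_sq_add_sinCutoff_sq,
    mul_one]

theorem localizerNear_of_le (hδ : 0 < δ) (hx : x ≤ 3 * δ) :
    localizerNear δ G x = localizer δ G x := by
  rw [localizerNear, cosCutoff_of_le seven_lt_rampEnd.le (rescale_le_seven hδ hx),
    mul_one]

theorem deriv_localizer (hG : DifferentiableAt ℝ G x) :
    deriv (localizer δ G) x =
      deriv ramp (rescale δ x) / δ * G x + ramp (rescale δ x) * deriv G x := by
  have hramp := ((contDiff_ramp.differentiable (by simp)) (rescale δ x)).hasDerivAt.comp x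
    (hasDerivAt_rescale (δ := δ))
  rw [div_eq_mul_one_div]
  exact (hramp.mul hG.hasDerivAt).deriv

theorem support_rampRemainder_rescale_subset (hδ : 0 < δ) :
    (Function.support fun x => rampRemainder (rescale δ x)) ⊆ Icc (-(4 * δ)) (4 * δ) := by
  refine fun x hx => ⟨le_of_not_ge fun h => hx ?_, le_of_not_ge fun h => hx ?_⟩
  · exact rampRemainder_of_nonpos (rescale_nonpos hδ h)
  · exact rampRemainder_of_ge (rampEnd_le_rescale hδ h)

theorem one_div_four_le_rampRemainder_rescale (hδ : 0 < δ) (hx : x ∈ Icc (-(3 * δ)) (3 * δ)) :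
    1 / 4 ≤ rampRemainder (rescale δ x) := by
  rw [rampRemainder_of_le_seven (rescale_le_seven hδ hx.2)]
  exact (one_div_four_le_risingProfile (one_le_rescale hδ hx.1)).trans
    (risingProfile_le_risingRemainder _)

namespace IsSlowCutoff

theorem localizer_nonneg (hG : IsSlowCutoff c b C G) : 0 ≤ localizer δ G x :=
  mul_nonneg ramp_nonneg (hG.nonneg x)

theorem localizer_le_one (hG : IsSlowCutoff c b C G) : localizer δ G x ≤ 1 :=
  mul_le_one₀ ramp_le_one (hG.nonneg x) (hG.le_one x)

theorem support_localizer_subset (hG : IsSlowCutoff c b C G) (hδ : 0 < δ) :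
    Function.support (localizer δ G) ⊆ Icc (-(4 * δ)) b := by
  refine fun x hx => ⟨le_of_not_ge fun h => left_ne_zero_of_mul hx ?_,
    le_of_not_ge fun h => right_ne_zero_of_mul hx (hG.eq_zero x h)⟩
  exact ramp_of_nonpos (rescale_nonpos hδ h)

theorem support_localizerNear_subset (hG : IsSlowCutoff c b C G) (hδ : 0 < δ) :
    Function.support (localizerNear δ G) ⊆ Icc (-(4 * δ)) (4 * δ) := by
  refine fun x hx => ⟨(hG.support_localizer_subset hδ (left_ne_zero_of_mul hx)).1,
    le_of_not_ge fun h => right_ne_zero_of_mul hx ?_⟩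
  exact cosCutoff_of_ge seven_lt_rampEnd (rampEnd_le_rescale hδ h)

theorem support_localizerFar_subset (hG : IsSlowCutoff c b C G) (hδ : 0 < δ) :
    Function.support (localizerFar δ G) ⊆ Ioc (3 * δ) b := by
  refine fun x hx => ⟨lt_of_not_ge fun h => right_ne_zero_of_mul hx ?_,
    (hG.support_localizer_subset hδ (left_ne_zero_of_mul hx)).2⟩
  exact sinCutoff_of_le seven_lt_rampEnd.le (rescale_le_seven hδ h)

theorem localizerFar_nonneg (hG : IsSlowCutoff c b C G) : 0 ≤ localizerFar δ G x :=
  mul_nonneg hG.localizer_nonneg sinCutoff_nonneg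

theorem localizerFar_le_one (hG : IsSlowCutoff c b C G) : localizerFar δ G x ≤ 1 :=
  mul_le_one₀ hG.localizer_le_one sinCutoff_nonneg sinCutoff_le_one

theorem support_localizerError_subset (hG : IsSlowCutoff c b C G) (hc : 3 * δ < c) :
    Function.support (localizerError δ G) ⊆ Ioc (3 * δ) b := by
  refine fun x hx => ⟨lt_of_not_ge fun h => hx ?_, le_of_not_ge fun h => hx ?_⟩
  · rw [localizerError, hG.deriv_eq_zero_of_lt (h.trans_lt hc), mul_zero, neg_zero]
  · rw [localizerError, hG.eq_zero x h, mul_zero, zero_mul, neg_zero]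

theorem abs_localizerError_le (hG : IsSlowCutoff c b C G) : |localizerError δ G x| ≤ C := by
  have hfactor : 0 ≤ ramp (rescale δ x) ^ 2 * G x := mul_nonneg (sq_nonneg _) (hG.nonneg x)
  rw [localizerError, abs_neg, abs_mul, abs_of_nonneg hfactor]
  have hfactor_le : ramp (rescale δ x) ^ 2 * G x ≤ 1 :=
    mul_le_one₀ (pow_le_one₀ ramp_nonneg ramp_le_one) (hG.nonneg x) (hG.le_one x)
  exact (mul_le_of_le_one_left (abs_nonneg _) hfactor_le).trans (hG.abs_deriv_le x)

theorem neg_le_deriv_localizer (hG : IsSlowCutoff c b C G) (hδ : 0 < δ) :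
    -C ≤ deriv (localizer δ G) x := by
  rw [deriv_localizer hG.differentiable.differentiableAt]
  have hrise : 0 ≤ deriv ramp (rescale δ x) / δ * G x :=
    mul_nonneg (div_nonneg deriv_ramp_nonneg hδ.le) (hG.nonneg x)
  have hdescent : ramp (rescale δ x) * -deriv G x ≤ -deriv G x :=
    mul_le_of_le_one_left (neg_nonneg.2 hG.antitone.deriv_nonpos) ramp_le_one
  linarith [hG.neg_le_deriv x]

theorem localizer_of_le (hG : IsSlowCutoff c b C G) (hx : x ≤ c) :
    localizer δ G x = ramp (rescale δ x) := by
  rw [localizer, hG.eq_one x hx, mul_one]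

theorem deriv_localizer_of_lt (hG : IsSlowCutoff c b C G) (hx : x < c) :
    deriv (localizer δ G) x = deriv ramp (rescale δ x) / δ := by
  rw [deriv_localizer hG.differentiable.differentiableAt, hG.eq_one x hx.le,
    hG.deriv_eq_zero_of_lt hx, mul_one, mul_zero, add_zero]

theorem deriv_localizer_nonneg (hG : IsSlowCutoff c b C G) (hδ : 0 < δ) (hx : x < c) :
    0 ≤ deriv (localizer δ G) x := by
  rw [hG.deriv_localizer_of_lt hx]
  exact div_nonneg deriv_ramp_nonneg hδ.le

theorem one_div_four_le_localizer (hG : IsSlowCutoff c b C G) (hδ : 0 < δ) (hc : 3 * δ < c)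
    (hx : x ∈ Icc (-(3 * δ)) (3 * δ)) : 1 / 4 ≤ localizer δ G x := by
  rw [hG.localizer_of_le (hx.2.trans hc.le), ramp_of_le_seven (rescale_le_seven hδ hx.2)]
  exact one_div_four_le_risingProfile (one_le_rescale hδ hx.1)

theorem one_div_le_deriv_localizer (hG : IsSlowCutoff c b C G) (hδ : 0 < δ) (hc : 3 * δ < c)
    (hx : x ∈ Icc (-(3 * δ)) (3 * δ)) : 1 / (12 * δ) ≤ deriv (localizer δ G) x := by
  have hs := rescale_le_seven hδ hx.2
  rw [hG.deriv_localizer_of_lt (hx.2.trans_lt hc), deriv_ramp_of_le_seven hs, ← div_div]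
  exact div_le_div_of_nonneg_right
    (one_div_twelve_le_deriv_risingProfile (one_le_rescale hδ hx.1) hs) hδ.le

theorem localizer_le_mul_deriv (hG : IsSlowCutoff c b C G) (hδ : 0 < δ) (hc : 3 * δ < c)
    (hx : x ≤ 3 * δ) : localizer δ G x ≤ 12 * δ * deriv (localizer δ G) x := by
  have hs := rescale_le_seven hδ hx
  rw [hG.localizer_of_le (hx.trans hc.le), hG.deriv_localizer_of_lt (hx.trans_lt hc),
    mul_assoc, mul_div_cancel₀ _ hδ.ne', ramp_of_le_seven hs, deriv_ramp_of_le_seven hs]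
  exact risingProfile_le_twelve_mul_deriv _

theorem comp_rescale_mul_eq_self (hG : IsSlowCutoff (4 * δ) b C G) (hδ : 0 < δ) {f : ℝ → ℝ}
    (hf : ∀ s, rampEnd ≤ s → f s = 0) : f (rescale δ x) * G x = f (rescale δ x) := by
  rcases le_total x (4 * δ) with hx | hx
  · rw [hG.eq_one x hx, mul_one]
  · rw [hf _ (rampEnd_le_rescale hδ hx), zero_mul]

theorem localizer_mul_deriv (hG : IsSlowCutoff (4 * δ) b C G) (hδ : 0 < δ) :
    localizer δ G x * deriv (localizer δ G) x =
      1 / (24 * δ) * localizerNear δ G x ^ 2 + 1 / (24 * δ) * rampRemainder (rescale δ x) ^ 2 -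
        localizerError δ G x := by
  set s := rescale δ x with hs
  have hderiv : deriv ramp s * G x = deriv ramp s :=
    hG.comp_rescale_mul_eq_self hδ fun _ => deriv_ramp_of_ge
  have hnear : localizerNear δ G x = ramp s * cosCutoff 7 rampEnd s := by
    rw [localizerNear, localizer, mul_assoc, mul_comm (G x),
      hG.comp_rescale_mul_eq_self hδ fun _ => cosCutoff_of_ge seven_lt_rampEnd]
  calc localizer δ G x * deriv (localizer δ G) x
      = ramp s * (deriv ramp s * G x * G x) / δ - localizerError δ G x := by
        rw [deriv_localizer hG.differentiable.differentiableAt, localizer, localizerError, ← hs]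
        ring
    _ = 1 / (24 * δ) * (24 * ramp s * deriv ramp s) - localizerError δ G x := by
        rw [hderiv, hderiv]
        field_simp
    _ = _ := by rw [twentyFour_mul_ramp_mul_deriv_ramp, hnear, mul_add]

end IsSlowCutoff

end Localizer

/-- Existence of the localizer `ψ` for propagation along the unstable
direction: for every `ε₀ > 0` there is `δ₀ ∈ (0, ε₀/3)` such that for every
`δ ∈ (0, δ₀]` there are smooth `ψ, ψ₋, ψ₊, b̃, ẽ` with the support, monotonicity,
size, splitting `ψ² = ψ₋² + ψ₊²`, and commutator-decomposition
`ψψ' = (1/(24δ))ψ₋² + (1/(24δ))b̃² − ẽ` properties. -/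
theorem unstable_localizer_exists (ε₀ : ℝ) (hε₀ : 0 < ε₀) :
    ∃ δ₀ : ℝ, 0 < δ₀ ∧ δ₀ < ε₀ / 3 ∧
      ∀ δ : ℝ, 0 < δ → δ ≤ δ₀ →
        ∃ ψ ψm ψp b e : ℝ → ℝ,
          ContDiff ℝ (⊤ : ℕ∞) ψ ∧ ContDiff ℝ (⊤ : ℕ∞) ψm ∧ ContDiff ℝ (⊤ : ℕ∞) ψp ∧
          ContDiff ℝ (⊤ : ℕ∞) b ∧ ContDiff ℝ (⊤ : ℕ∞) e ∧
          (∀ x : ℝ, 0 ≤ ψ x ∧ ψ x ≤ 1) ∧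
          Function.support ψ ⊆ Set.Icc (-(4 * δ)) (2 * ε₀) ∧
          (∀ x : ℝ, x ≤ 0 → 0 ≤ deriv ψ x) ∧
          1 / 4 ≤ ψ (-(3 * δ)) ∧
          (∀ x ∈ Set.Icc (-(3 * δ)) (3 * δ), 1 / (12 * δ) ≤ deriv ψ x) ∧
          (∀ x : ℝ, 0 ≤ x → -(1 / ε₀) ≤ deriv ψ x) ∧
          (∀ x ∈ Set.Icc (-(4 * δ)) (3 * δ), ψ x ≤ 12 * δ * deriv ψ x) ∧
          (∀ x : ℝ, ψ x ^ 2 = ψm x ^ 2 + ψp x ^ 2) ∧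
          (∀ x : ℝ, x ≤ 3 * δ → ψm x = ψ x) ∧
          Function.support ψm ⊆ Set.Icc (-(4 * δ)) (4 * δ) ∧
          (∀ x : ℝ, 0 ≤ ψp x ∧ ψp x ≤ 1) ∧
          Function.support ψp ⊆ Set.Ioc (3 * δ) (2 * ε₀) ∧
          (∀ x : ℝ, ψ x * deriv ψ x =
            (1 / (24 * δ)) * ψm x ^ 2 + (1 / (24 * δ)) * b x ^ 2 - e x) ∧
          (∀ x : ℝ, 0 ≤ b x) ∧
          Function.support b ⊆ Set.Icc (-(4 * δ)) (4 * δ) ∧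
          (∀ x ∈ Set.Icc (-(3 * δ)) (3 * δ), 1 / 4 ≤ b x) ∧
          Function.support e ⊆ Set.Ioc (3 * δ) (2 * ε₀) ∧
          (∀ x : ℝ, |e x| ≤ 1 / ε₀) := by
  refine ⟨ε₀ / 5, by positivity, by linarith, fun δ hδ hδε => ?_⟩
  have hslope : 1 < 1 / ε₀ * (2 * ε₀ - 4 * δ) := by
    rw [one_div_mul_eq_div, one_lt_div hε₀]
    linarith
  obtain ⟨G, hG⟩ := exists_isSlowCutoff (by linarith) hslope
  have hgap : 3 * δ < 4 * δ := by linarith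
  exact ⟨localizer δ G, localizerNear δ G, localizerFar δ G, fun x => rampRemainder (rescale δ x),
    localizerError δ G, contDiff_localizer hG.contDiff, contDiff_localizerNear hG.contDiff,
    contDiff_localizerFar hG.contDiff, contDiff_rampRemainder.comp contDiff_rescale,
    contDiff_localizerError hG.contDiff, fun x => ⟨hG.localizer_nonneg, hG.localizer_le_one⟩,
    hG.support_localizer_subset hδ, fun x hx => hG.deriv_localizer_nonneg hδ (by linarith),
    hG.one_div_four_le_localizer hδ hgap ⟨le_rfl, by linarith⟩,
    fun x => hG.one_div_le_deriv_localizer hδ hgap, fun x _ => hG.neg_le_deriv_localizer hδ,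
    fun x hx => hG.localizer_le_mul_deriv hδ hgap hx.2, fun x => localizer_sq,
    fun x => localizerNear_of_le hδ, hG.support_localizerNear_subset hδ,
    fun x => ⟨hG.localizerFar_nonneg, hG.localizerFar_le_one⟩,
    hG.support_localizerFar_subset hδ, fun x => hG.localizer_mul_deriv hδ,
    fun x => rampRemainder_nonneg, support_rampRemainder_rescale_subset hδ,
    fun x => one_div_four_le_rampRemainder_rescale hδ, hG.support_localizerError_subset hgap,
    fun x => hG.abs_localizerError_le⟩
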